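/- Let p be a prime and let K be a field with a nontrivial nonarchimedean multiplicative norm ‖·‖ : K → ℝ≥0 such that ‖p·1_K‖ < 1 (the residue field has characteristic p). Then there exists a field L with a nonarchimedean multiplicative norm and an isometric ring embedding K → L such that: (i) L is spherically complete (every chain of closed balls in L has nonempty intersection); (ii) the value group of L is all of ℝ_{>0} (for every real r > 0 there is x ∈ L with ‖x‖ = r); and (iii) for every ϖ ∈ L with ‖p·1_L‖ ≤ ‖ϖ‖^p and 0 < ‖ϖ‖ < 1, the p-power map L°/ϖL° → L°/ϖ^pL° is surjective, i.e. for every y ∈ L with ‖y‖ ≤ 1 there is x ∈ L with ‖x‖ ≤ 1 and ‖y − x^p‖ ≤ ‖ϖ‖^p (so L is a perfectoid field). -/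

import Mathlib

/-- A field equipped with a nonarchimedean multiplicative norm valued in `ℝ≥0`. -/
structure NAField : Type 1 where
  carrier : Type
  [fieldInst : Field carrier]
  val : Valuation carrier NNReal

attribute [instance] NAField.fieldInst

/-- `L` is spherically complete: every family of closed balls that is totally ordered by
inclusion has nonempty intersection. -/
def SphericallyComplete {K : Type*} [Field K] (v : Valuation K NNReal) : Prop :=
  ∀ 𝒞 : Set (Set K), (∀ B ∈ 𝒞, ∃ (c : K) (r : NNReal), B = {x : K | v (x - c) ≤ r}) →
    IsChain (· ⊆ ·) 𝒞 → (⋂₀ 𝒞).Nonempty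

open Filter Topology

section Ext

/-- The real absolute value attached to a valuation. -/
noncomputable def naAbs {K : Type} [Field K] (v : Valuation K NNReal) : AbsoluteValue K ℝ where
  toFun x := (v x : ℝ)
  map_mul' x y := by simp
  nonneg' x := NNReal.coe_nonneg _
  eq_zero' x := by simp
  add_le' x y := by
    have h := v.map_add x y
    have h2 : v (x + y) ≤ v x + v y := h.trans (max_le_add_of_nonneg zero_le zero_le)
    exact_mod_cast h2

theorem exists_algClosed_ext (K : Type) [Field K] (v : Valuation K NNReal)
    (hnt : ∃ x : K, x ≠ 0 ∧ v x ≠ 1) :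
    ∃ (A : Type) (_ : Field A) (_ : IsAlgClosed A) (w : Valuation A NNReal) (f : K →+* A),
      ∀ x, w (f x) = v x := by
  letI : NormedField K := (naAbs v).toNormedField
  have hnorm : ∀ x : K, ‖x‖ = (v x : ℝ) := fun x => rfl
  let K' := UniformSpace.Completion K
  have hcoe : ∀ x : K, ‖((x : K) : K')‖ = (v x : ℝ) := fun x => by
    rw [UniformSpace.Completion.norm_coe, hnorm]
  have hv_nat : ∀ n : ℕ, v (n : K) ≤ 1 := by
    intro n
    induction n with
    | zero => simp
    | succ k ih =>
      push_cast
      exact (v.map_add _ _).trans (max_le ih (by simp))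
  have hone : ∃ x : K, 1 < v x := by
    obtain ⟨x, hx0, hx1⟩ := hnt
    rcases lt_or_gt_of_ne hx1 with h | h
    · refine ⟨x⁻¹, ?_⟩
      rw [map_inv₀]
      exact (one_lt_inv₀ (by rw [pos_iff_ne_zero]; simpa using hx0)).2 h
    · exact ⟨x, h⟩
  letI : NontriviallyNormedField K' :=
    { (inferInstance : NormedField K') with
      non_trivial := by
        obtain ⟨x, hx⟩ := hone
        refine ⟨(x : K'), ?_⟩
        change 1 < ‖((x : K) : K')‖
        rw [hcoe]
        exact_mod_cast hx }
  haveI : IsUltrametricDist K' := by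
    apply IsUltrametricDist.isUltrametricDist_of_forall_norm_natCast_le_one
    intro n
    have : ((n : K') : K') = (((n : K) : K) : K') :=
      (map_natCast (UniformSpace.Completion.coeRingHom : K →+* K') n).symm
    rw [this]
    change ‖(((n : K) : K) : K')‖ ≤ 1
    rw [hcoe]
    exact_mod_cast hv_nat n
  let A := AlgebraicClosure K'
  have hpos : ∀ x : A, 0 ≤ spectralNorm K' A x := fun x => spectralNorm_nonneg x
  have hmul : ∀ x y : A, spectralNorm K' A (x * y) = spectralNorm K' A x * spectralNorm K' A y :=
    fun x y => map_mul (spectralMulAlgNorm K' A) x y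
  refine ⟨A, inferInstance, inferInstance,
    { toFun := fun x => ⟨spectralNorm K' A x, hpos x⟩
      map_zero' := NNReal.eq (spectralNorm_zero)
      map_one' := NNReal.eq (spectralNorm_one)
      map_mul' := fun x y => NNReal.eq (hmul x y)
      map_add_le_max' := fun x y => by
        have h := isNonarchimedean_spectralNorm (K := K') (L := A) x y
        rcases le_max_iff.1 h with h | h
        · exact le_max_of_le_left h
        · exact le_max_of_le_right h },
    (algebraMap K' A).comp UniformSpace.Completion.coeRingHom, ?_⟩
  intro x
  apply NNReal.eq
  change spectralNorm K' A (algebraMap K' A (x : K')) = _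
  rw [spectralNorm_extends]
  exact hcoe x

end Ext

section Ultra

variable {A : Type} [Field A] (v : Valuation A NNReal)

/-- Bounded sequences. -/
def bddSeq : Subring (ℕ → A) where
  carrier := {x | ∃ C : NNReal, ∀ n, v (x n) ≤ C}
  mul_mem' := by
    rintro x y ⟨C, hC⟩ ⟨D, hD⟩
    refine ⟨C * D, fun n => ?_⟩
    simp only [Pi.mul_apply, map_mul]
    exact mul_le_mul' (hC n) (hD n)
  one_mem' := ⟨1, fun n => by simp⟩
  add_mem' := by
    rintro x y ⟨C, hC⟩ ⟨D, hD⟩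
    exact ⟨max C D, fun n => (v.map_add _ _).trans (max_le_max (hC n) (hD n))⟩
  zero_mem' := ⟨0, fun n => by simp⟩
  neg_mem' := by
    rintro x ⟨C, hC⟩
    exact ⟨C, fun n => by simpa [Valuation.map_neg] using hC n⟩

theorem exists_ulim (x : bddSeq v) :
    ∃ r : NNReal, Tendsto (fun n => v (x.1 n)) (hyperfilter ℕ : Filter ℕ) (𝓝 r) := by
  obtain ⟨C, hC⟩ := x.2
  obtain ⟨r, -, hr⟩ := (isCompact_Icc (a := (0 : NNReal)) (b := C)).ultrafilter_le_nhds
    ((hyperfilter ℕ).map (fun n => v (x.1 n)))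
    (by
      rw [le_principal_iff]
      exact Filter.mem_map.2 (Filter.univ_mem' fun n => ⟨zero_le, hC n⟩))
  exact ⟨r, hr⟩

/-- The ultralimit of the norms. -/
noncomputable def ulim (x : bddSeq v) : NNReal := (exists_ulim v x).choose

theorem ulim_spec (x : bddSeq v) :
    Tendsto (fun n => v (x.1 n)) (hyperfilter ℕ : Filter ℕ) (𝓝 (ulim v x)) :=
  (exists_ulim v x).choose_spec

theorem ulim_eq {x : bddSeq v} {r : NNReal}
    (h : Tendsto (fun n => v (x.1 n)) (hyperfilter ℕ : Filter ℕ) (𝓝 r)) : ulim v x = r :=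
  tendsto_nhds_unique (ulim_spec v x) h

/-- The ultralimit valuation. -/
noncomputable def ulimVal : Valuation (bddSeq v) NNReal where
  toFun := ulim v
  map_zero' := ulim_eq v (by simp)
  map_one' := ulim_eq v (by simp)
  map_mul' x y := ulim_eq v (by simpa using (ulim_spec v x).mul (ulim_spec v y))
  map_add_le_max' x y :=
    le_of_tendsto_of_tendsto (ulim_spec v (x + y)) ((ulim_spec v x).max (ulim_spec v y))
      (Eventually.of_forall fun n => v.map_add _ _)

theorem ulimVal_apply (x : bddSeq v) : ulimVal v x = ulim v x := rfl

theorem ulimVal_supp_isMaximal : (ulimVal v).supp.IsMaximal := by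
  rw [Ideal.isMaximal_iff]
  constructor
  · rw [Valuation.mem_supp_iff]; simp
  · intro J x hJ hx hxJ
    rw [Valuation.mem_supp_iff, ulimVal_apply] at hx
    have hpos : 0 < ulim v x := pos_iff_ne_zero.2 hx
    set r := ulim v x with hr
    have hev : ∀ᶠ n in (hyperfilter ℕ : Filter ℕ), r / 2 < v (x.1 n) :=
      (ulim_spec v x).eventually_const_lt (by rw [← hr]; exact NNReal.half_lt_self hx)
    classical
    let y : bddSeq v := ⟨fun n => if r / 2 < v (x.1 n) then (x.1 n)⁻¹ else 0, (r / 2)⁻¹, fun n => by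
      dsimp only
      split_ifs with h
      · rw [map_inv₀]
        exact inv_anti₀ (by positivity) h.le
      · simp⟩
    have h1 : x * y - 1 ∈ (ulimVal v).supp := by
      rw [Valuation.mem_supp_iff, ulimVal_apply]
      apply ulim_eq
      apply tendsto_const_nhds.congr'
      filter_upwards [hev] with n hn
      have h0 : x.1 n ≠ 0 := by
        intro h0
        rw [h0, map_zero] at hn
        exact not_lt_zero hn
      have : (x * y - 1 : bddSeq v).1 n = 0 := by
        change x.1 n * (if r / 2 < v (x.1 n) then (x.1 n)⁻¹ else 0) - 1 = 0
        rw [if_pos hn, mul_inv_cancel₀ h0, sub_self]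
      rw [this, map_zero]
    have h2 : x * y ∈ J := J.mul_mem_right _ hxJ
    have := J.sub_mem h2 (hJ h1)
    simpa using this

/-- The field `L`. -/
noncomputable def ultraField : NAField :=
  letI := ulimVal_supp_isMaximal v
  { carrier := bddSeq v ⧸ (ulimVal v).supp
    fieldInst := Ideal.Quotient.field _
    val := (ulimVal v).onQuot le_rfl }

/-- Projection. -/
noncomputable def ultraMk : bddSeq v →+* (ultraField v).carrier :=
  letI := ulimVal_supp_isMaximal v
  Ideal.Quotient.mk (ulimVal v).supp

theorem ultraMk_surjective : Function.Surjective (ultraMk v) := Ideal.Quotient.mk_surjective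

theorem ultraMk_val (x : bddSeq v) : (ultraField v).val (ultraMk v x) = ulim v x := rfl

/-- Constant sequences. -/
def constSeq : A →+* bddSeq v where
  toFun a := ⟨fun _ => a, v a, fun _ => le_rfl⟩
  map_zero' := rfl
  map_one' := rfl
  map_mul' _ _ := rfl
  map_add' _ _ := rfl

theorem ulim_const (a : A) : ulim v (constSeq v a) = v a := ulim_eq v tendsto_const_nhds

theorem ulim_countable (b : ℕ → bddSeq v) (r : ℕ → NNReal)
    (h : ∀ i j, i ≤ j → ulim v (b i - b j) ≤ r i) :
    ∃ x : bddSeq v, ∀ i, ulim v (x - b i) ≤ r i := by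
  classical
  let G : ℕ → ℕ → Prop := fun n k =>
    ∀ i ≤ k, v ((b i).1 n - (b k).1 n) < r i + 1 / ((k : NNReal) + 1)
  have hG0 : ∀ n, G n 0 := by
    intro n i hi
    obtain rfl : i = 0 := by omega
    rw [sub_self, map_zero]
    positivity
  have hGev : ∀ k, ∀ᶠ n in (hyperfilter ℕ : Filter ℕ), G n k := by
    intro k
    have : ∀ i ∈ Set.Iic k, ∀ᶠ n in (hyperfilter ℕ : Filter ℕ),
        v ((b i).1 n - (b k).1 n) < r i + 1 / ((k : NNReal) + 1) := by
      intro i hi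
      refine (ulim_spec v (b i - b k)).eventually_lt_const ?_
      exact (h i k hi).trans_lt (lt_add_of_pos_right _ (by positivity))
    exact (Filter.eventually_all_finite (Set.finite_Iic k)).2 this
  let κ : ℕ → ℕ := fun n => Nat.findGreatest (G n) n
  have hκ : ∀ n, G n (κ n) := fun n => Nat.findGreatest_spec (Nat.zero_le n) (hG0 n)
  have hκev : ∀ k, ∀ᶠ n in (hyperfilter ℕ : Filter ℕ), k ≤ κ n := by
    intro k
    have h2 : ∀ᶠ n in (hyperfilter ℕ : Filter ℕ), k ≤ n :=
      Nat.hyperfilter_le_atTop (eventually_ge_atTop k)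
    filter_upwards [hGev k, h2] with n hn hkn
    exact Nat.le_findGreatest hkn hn
  obtain ⟨C, hC⟩ := (b 0).2
  have hle1 : ∀ m k : ℕ, m ≤ k → 1 / ((k : NNReal) + 1) ≤ 1 / ((m : NNReal) + 1) := by
    intro m k hmk
    have : (m : NNReal) ≤ k := by exact_mod_cast hmk
    gcongr
  let x : bddSeq v := ⟨fun n => (b (κ n)).1 n, max C (r 0 + 1), fun n => by
    have h1 := (hκ n 0 (Nat.zero_le _)).le
    have h2 : v ((b 0).1 n - (b (κ n)).1 n) ≤ r 0 + 1 := by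
      refine h1.trans ?_
      have := hle1 0 (κ n) (Nat.zero_le _)
      gcongr
      simpa using this
    have h3 : (b (κ n)).1 n = (b 0).1 n - ((b 0).1 n - (b (κ n)).1 n) := by ring
    dsimp only
    rw [h3]
    exact (v.map_sub _ _).trans (max_le_max (hC n) h2)⟩
  refine ⟨x, fun i => ?_⟩
  apply le_of_forall_pos_le_add
  intro ε hε
  obtain ⟨m, hm⟩ := exists_nat_one_div_lt (K := ℝ) (NNReal.coe_pos.2 hε)
  have hm' : 1 / ((m : NNReal) + 1) < ε := by exact_mod_cast hm
  refine le_of_tendsto (ulim_spec v (x - b i)) ?_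
  filter_upwards [hκev i, hκev m] with n hi hmn
  change v ((b (κ n)).1 n - (b i).1 n) ≤ _
  rw [Valuation.map_sub_swap]
  refine (hκ n i hi).le.trans ?_
  gcongr
  exact (hle1 _ _ hmn).trans hm'.le

theorem ultra_countable (c : ℕ → (ultraField v).carrier) (r : ℕ → NNReal)
    (h : ∀ i j, i ≤ j → (ultraField v).val (c i - c j) ≤ r i) :
    ∃ x, ∀ i, (ultraField v).val (x - c i) ≤ r i := by
  choose b hb using fun i => ultraMk_surjective v (c i)
  obtain ⟨x, hx⟩ := ulim_countable v b r (fun i j hij => by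
    have := h i j hij
    rwa [← hb, ← hb, ← map_sub, ultraMk_val] at this)
  refine ⟨ultraMk v x, fun i => ?_⟩
  rw [← hb, ← map_sub, ultraMk_val]
  exact hx i

theorem sphericallyComplete_of_countable {L : Type*} [Field L] (w : Valuation L NNReal)
    (H : ∀ (c : ℕ → L) (r : ℕ → NNReal), (∀ i j, i ≤ j → w (c i - c j) ≤ r i) →
      ∃ x, ∀ i, w (x - c i) ≤ r i) : SphericallyComplete w := by
  intro 𝒞 hB hch
  rcases 𝒞.eq_empty_or_nonempty with rfl | hne
  · exact ⟨0, by simp⟩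
  have key : ∀ c r c' r', {x : L | w (x - c) ≤ r} ∈ 𝒞 → {x : L | w (x - c') ≤ r'} ∈ 𝒞 → r ≤ r' →
      {x : L | w (x - c) ≤ r} ⊆ {x : L | w (x - c') ≤ r'} := by
    intro c r c' r' h h' hr
    rcases hch.total h h' with hs | hs
    · exact hs
    · have hc : w (c' - c) ≤ r := hs (show w (c' - c') ≤ r' by simp)
      intro x hx
      have hx' : w (x - c) ≤ r := hx
      have : x - c' = (x - c) - (c' - c) := by ring
      change w (x - c') ≤ r'
      rw [this]
      exact (w.map_sub _ _).trans (max_le (hx'.trans hr) (hc.trans hr))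
  let S : Set NNReal := {r | ∃ c, {x : L | w (x - c) ≤ r} ∈ 𝒞}
  have hS : S.Nonempty := by
    obtain ⟨B, hBm⟩ := hne
    obtain ⟨c, r, rfl⟩ := hB B hBm
    exact ⟨r, c, hBm⟩
  have hbdd : BddBelow S := OrderBot.bddBelow S
  by_cases hmin : sInf S ∈ S
  · obtain ⟨c, hc⟩ := hmin
    refine ⟨c, ?_⟩
    intro B hBm
    obtain ⟨c', r', rfl⟩ := hB B hBm
    exact key _ _ _ _ hc hBm (csInf_le hbdd ⟨c', hBm⟩) (show w (c - c) ≤ _ by simp)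
  · obtain ⟨u, hu, hut, huS⟩ := exists_seq_tendsto_sInf hS hbdd
    choose c hc using huS
    obtain ⟨x, hx⟩ := H c u (fun i j hij => by
      have := key _ _ _ _ (hc j) (hc i) (hu hij) (show w (c j - c j) ≤ u j by simp)
      rw [Valuation.map_sub_swap]
      exact this)
    refine ⟨x, ?_⟩
    intro B hBm
    obtain ⟨c', r', rfl⟩ := hB B hBm
    have hlt : sInf S < r' := lt_of_le_of_ne (csInf_le hbdd ⟨c', hBm⟩)
      (fun h => hmin (h ▸ ⟨c', hBm⟩))
    obtain ⟨i, hi⟩ := (hut.eventually_lt_const hlt).exists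
    exact key _ _ _ _ (hc i) hBm hi.le (hx i)

theorem exists_root_seq [IsAlgClosed A] (k : ℕ) (hk : 0 < k) (y : bddSeq v) :
    ∃ x : bddSeq v, x ^ k = y := by
  choose z hz using fun n => IsAlgClosed.exists_pow_nat_eq (y.1 n) hk
  obtain ⟨C, hC⟩ := y.2
  refine ⟨⟨z, max C 1, fun n => ?_⟩, ?_⟩
  · by_cases h1 : v (z n) ≤ 1
    · exact h1.trans (le_max_right _ _)
    · refine le_trans ?_ (le_max_left _ _)
      refine le_trans (le_self_pow₀ (not_le.1 h1).le hk.ne') ?_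
      rw [← map_pow, hz]
      exact hC n
  · apply Subtype.ext
    funext n
    exact hz n

theorem ultra_surj [IsAlgClosed A] (hnt : ∃ x, 1 < v x) (r : NNReal) (hr : 0 < r) :
    ∃ x : bddSeq v, ulim v x = r := by
  obtain ⟨t, ht⟩ := hnt
  choose s hs using fun n : ℕ => IsAlgClosed.exists_pow_nat_eq t (Nat.succ_pos n)
  have hs' : ∀ n, v (s n) ^ (n + 1) = v t := fun n => by rw [← map_pow, hs]
  have hs1 : ∀ n, 1 < v (s n) := by
    intro n
    by_contra hcon
    have := pow_le_one₀ zero_le (not_lt.1 hcon) (n := n + 1)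
    rw [hs'] at this
    exact absurd ht (not_lt.2 this)
  have hlim : Tendsto (fun n => v (s n)) atTop (𝓝 1) := by
    have h1 : ∀ n : ℕ, v (s n) = v t ^ (1 / ((n : ℝ) + 1)) := by
      intro n
      rw [← hs' n, ← NNReal.rpow_natCast, ← NNReal.rpow_mul]
      have : ((n + 1 : ℕ) : ℝ) * (1 / ((n : ℝ) + 1)) = 1 := by
        push_cast
        field_simp
      rw [this, NNReal.rpow_one]
    have h2 : Tendsto (fun n : ℕ => v t ^ (1 / ((n : ℝ) + 1))) atTop (𝓝 (v t ^ (0 : ℝ))) :=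
      (tendsto_const_nhds (x := v t)).nnrpow tendsto_one_div_add_atTop_nhds_zero_nat
        (Or.inl (zero_lt_one.trans ht).ne')
    rw [NNReal.rpow_zero] at h2
    exact h2.congr fun n => (h1 n).symm
  choose k hk using fun n => exists_mem_Ico_zpow hr (hs1 n)
  have hle : ∀ n, v (s n ^ k n) ≤ r := fun n => by rw [map_zpow₀]; exact (hk n).1
  have hge : ∀ n, r / v (s n) ≤ v (s n ^ k n) := fun n => by
    have h0 : 0 < v (s n) := zero_lt_one.trans (hs1 n)
    rw [map_zpow₀, div_le_iff₀ h0, ← zpow_add_one₀ h0.ne']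
    exact (hk n).2.le
  refine ⟨⟨fun n => s n ^ k n, r, hle⟩, ulim_eq v ?_⟩
  refine Tendsto.mono_left ?_ Nat.hyperfilter_le_atTop
  refine tendsto_of_tendsto_of_tendsto_of_le_of_le ?_ tendsto_const_nhds hge hle
  have h3 : Tendsto (fun n => r / v (s n)) atTop (𝓝 (r / 1)) :=
    (tendsto_const_nhds (x := r)).div hlim one_ne_zero
  rwa [div_one] at h3

end Ultra

/-- Let `p` be a prime and `K` a field with a nontrivial nonarchimedean multiplicative
norm with `‖p‖ < 1`.  Then there is a nonarchimedean field `L` and an isometric ring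
embedding `K → L` such that `L` is spherically complete, the value group of `L` is all of
`ℝ_{>0}`, and Frobenius is surjective on `L°/ϖ^p` for every pseudo-uniformizer `ϖ` with
`‖p‖ ≤ ‖ϖ‖^p` — i.e. `L` is a perfectoid field. -/
theorem exists_sphericallyComplete_perfectoid_extension (p : ℕ) (hp : p.Prime)
    (K : Type) [Field K] (v : Valuation K NNReal)
    (hnt : ∃ x : K, x ≠ 0 ∧ v x ≠ 1)
    (hchar : v (p : K) < 1) :
    ∃ (L : NAField) (f : K →+* L.carrier),
      Function.Injective f ∧
      (∀ x : K, L.val (f x) = v x) ∧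
      SphericallyComplete L.val ∧
      (∀ r : NNReal, 0 < r → ∃ x : L.carrier, L.val x = r) ∧
      (∀ ϖ : L.carrier, 0 < L.val ϖ → L.val ϖ < 1 →
        L.val ((p : L.carrier)) ≤ (L.val ϖ) ^ p →
        ∀ y : L.carrier, L.val y ≤ 1 →
          ∃ x : L.carrier, L.val x ≤ 1 ∧ L.val (y - x ^ p) ≤ (L.val ϖ) ^ p) := by
  obtain ⟨A, _, _, w, g, hg⟩ := exists_algClosed_ext K v hnt
  have hone : ∃ x : A, 1 < w x := by
    obtain ⟨x, hx0, hx1⟩ := hnt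
    rcases lt_or_gt_of_ne hx1 with h | h
    · refine ⟨g x⁻¹, ?_⟩
      rw [hg, map_inv₀]
      exact (one_lt_inv₀ (by rw [pos_iff_ne_zero]; simpa using hx0)).2 h
    · exact ⟨g x, by rwa [hg]⟩
  refine ⟨ultraField w, (ultraMk w).comp ((constSeq w).comp g), RingHom.injective _, ?_, ?_, ?_, ?_⟩
  · intro x
    change (ultraField w).val (ultraMk w (constSeq w (g x))) = _
    rw [ultraMk_val, ulim_const, hg]
  · exact sphericallyComplete_of_countable _ (ultra_countable w)
  · intro r hr
    obtain ⟨x, hx⟩ := ultra_surj w hone r hr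
    exact ⟨ultraMk w x, hx⟩
  · intro ϖ _ _ _ y hy
    obtain ⟨y, rfl⟩ := ultraMk_surjective w y
    obtain ⟨x, hx⟩ := exists_root_seq w p hp.pos y
    refine ⟨ultraMk w x, ?_, ?_⟩
    · rw [← hx, map_pow, map_pow] at hy
      exact (pow_le_one_iff_of_nonneg zero_le hp.ne_zero).1 hy
    · rw [← hx, map_pow, sub_self, map_zero]
      exact zero_le
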